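/- Let X be a complex vector space and 𝔔 a Hermitian form on X. Let V ⊆ X be a subspace with dim X/V < ∞ such that V^{𝔔𝔔} = V and V^𝔔 ⊆ V, and assume m⁻(𝔔|_V) is finite. Then m⁻(𝔔) − m⁻(𝔔|_V) = dim(V^𝔔/ker 𝔔). -/

import Mathlib

open Module Submodule

noncomputable section

variable {X : Type*} [AddCommGroup X] [Module ℂ X]

/-- The `Q`-orthogonal complement (polar) `V^𝔔` of a subspace `V` with respect to a
sesquilinear form `Q` (conjugate-linear in the first variable). -/
def qPolar (Q : X →ₗ⋆[ℂ] X →ₗ[ℂ] ℂ) (V : Submodule ℂ X) : Submodule ℂ X where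
  carrier := {x | ∀ v ∈ V, Q x v = 0}
  add_mem' := by
    intro a b ha hb v hv
    simp only [map_add, LinearMap.add_apply, ha v hv, hb v hv, add_zero]
  zero_mem' := by
    intro v hv
    simp
  smul_mem' := by
    intro c x hx v hv
    simp only [LinearMap.map_smulₛₗ, LinearMap.smul_apply, hx v hv, smul_zero]

/-- The kernel of the form `Q`, i.e. `X^𝔔`. -/
def qKer (Q : X →ₗ⋆[ℂ] X →ₗ[ℂ] ℂ) : Submodule ℂ X := qPolar Q ⊤

/-- The Morse index `m⁻(𝔔|_V)`: the supremum of dimensions of subspaces of `V`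
on which `Q` is negative definite, as an extended natural number. -/
def negIdx (Q : X →ₗ⋆[ℂ] X →ₗ[ℂ] ℂ) (V : Submodule ℂ X) : ℕ∞ :=
  sSup {k : ℕ∞ | ∃ W : Submodule ℂ X, W ≤ V ∧ FiniteDimensional ℂ W ∧
    (∀ x ∈ W, x ≠ 0 → (Q x x).re < 0) ∧ k = (Module.finrank ℂ W : ℕ∞)}

theorem qaux_mem (Q : X →ₗ⋆[ℂ] X →ₗ[ℂ] ℂ) (V : Submodule ℂ X) (x : X) :
    x ∈ qPolar Q V ↔ ∀ v ∈ V, Q x v = 0 := Iff.rfl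

theorem qaux_symm (Q : X →ₗ⋆[ℂ] X →ₗ[ℂ] ℂ)
    (hQ : ∀ x y, (starRingEnd ℂ) (Q x y) = Q y x) {x y : X} (h : Q x y = 0) : Q y x = 0 := by
  rw [← hQ, h, map_zero]

theorem qaux_surj (Q : X →ₗ⋆[ℂ] X →ₗ[ℂ] ℂ)
    (hQ : ∀ x y, (starRingEnd ℂ) (Q x y) = Q y x)
    {n : ℕ} (e : Fin n → X) (N : Submodule ℂ X)
    (h : ∀ a : Fin n → ℂ, (∀ y ∈ N, Q y (∑ i, a i • e i) = 0) → a = 0) (c : Fin n → ℂ) :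
    ∃ y ∈ N, ∀ i, Q (e i) y = c i := by
  let Ψ : X →ₗ[ℂ] (Fin n → ℂ) := LinearMap.pi (fun i => Q (e i))
  have htop : N.map Ψ = ⊤ := by
    by_contra hne
    obtain ⟨f, hf, hle⟩ := Submodule.exists_le_ker_of_lt_top _ (lt_top_iff_ne_top.mpr hne)
    have hfs : ∀ v : Fin n → ℂ, f v = ∑ i, v i * f (Pi.single i 1) := by
      intro v
      conv_lhs => rw [pi_eq_sum_univ' v]
      simp [map_sum, Pi.single, Function.update]
    have h0 := h (fun i => (starRingEnd ℂ) (f (Pi.single i 1))) (by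
      intro y hy
      apply qaux_symm Q hQ
      have h1 : f (Ψ y) = 0 := hle (Submodule.mem_map_of_mem hy)
      rw [hfs] at h1
      simp only [map_sum, LinearMap.map_smulₛₗ, LinearMap.sum_apply, LinearMap.smul_apply,
        smul_eq_mul, Complex.conj_conj]
      rw [← h1]
      exact Finset.sum_congr rfl fun i _ => mul_comm _ _)
    apply hf
    refine LinearMap.ext fun v => ?_
    rw [hfs]
    simp only [LinearMap.zero_apply]
    refine Finset.sum_eq_zero fun i _ => ?_
    have := congrFun h0 i
    simp only [Pi.zero_apply, map_eq_zero] at this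
    rw [this, mul_zero]
  have hc : c ∈ N.map Ψ := htop ▸ Submodule.mem_top
  obtain ⟨y, hy, rfl⟩ := hc
  exact ⟨y, hy, fun i => rfl⟩

theorem qaux_upper (Q : X →ₗ⋆[ℂ] X →ₗ[ℂ] ℂ) (V : Submodule ℂ X)
    (hcodim : Module.Finite ℂ (X ⧸ V)) :
    negIdx Q ⊤ ≤ negIdx Q V + (Module.finrank ℂ (X ⧸ V) : ℕ∞) := by
  apply sSup_le
  rintro k ⟨W, -, hW, hneg, rfl⟩
  have h1 := LinearMap.finrank_range_add_finrank_ker (V.mkQ.domRestrict W)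
  have h2 : finrank ℂ (LinearMap.range (V.mkQ.domRestrict W)) ≤ finrank ℂ (X ⧸ V) :=
    Submodule.finrank_le _
  have h3 : (finrank ℂ (LinearMap.ker (V.mkQ.domRestrict W)) : ℕ∞) ≤ negIdx Q V := by
    apply le_sSup
    refine ⟨(LinearMap.ker (V.mkQ.domRestrict W)).map W.subtype, ?_, inferInstance, ?_, ?_⟩
    · rintro _ ⟨x, hx, rfl⟩
      simpa using hx
    · rintro _ ⟨x, hx, rfl⟩ h
      exact hneg _ x.2 h
    · rw [Submodule.finrank_map_subtype_eq]
  calc (finrank ℂ W : ℕ∞) = (finrank ℂ (LinearMap.ker (V.mkQ.domRestrict W)) : ℕ∞)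
        + (finrank ℂ (LinearMap.range (V.mkQ.domRestrict W)) : ℕ∞) := by
        rw [← h1]; push_cast; exact add_comm _ _
    _ ≤ _ := add_le_add h3 (by exact_mod_cast h2)

theorem qaux_proj (Q : X →ₗ⋆[ℂ] X →ₗ[ℂ] ℂ)
    (hQ : ∀ x y, (starRingEnd ℂ) (Q x y) = Q y x)
    (W : Submodule ℂ X) [FiniteDimensional ℂ W] (hneg : ∀ x ∈ W, x ≠ 0 → (Q x x).re < 0)
    (x : X) : ∃ w ∈ W, ∀ y ∈ W, Q y (x - w) = 0 := by
  let b := Module.finBasis ℂ W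
  obtain ⟨w, hw, h⟩ := qaux_surj Q hQ (fun i => (b i : X)) W (by
    intro a ha
    have hmem : ∑ i, a i • (b i : X) ∈ W := W.sum_mem fun i _ => W.smul_mem _ (b i).2
    have h0 : ∑ i, a i • (b i : X) = 0 := by
      by_contra hne
      have := hneg _ hmem hne
      rw [ha _ hmem] at this
      simp at this
    have h1 : ∑ i, a i • b i = 0 := by
      apply Subtype.ext
      simpa using h0
    funext i
    exact Fintype.linearIndependent_iff.mp b.linearIndependent a h1 i) (fun i => Q (b i) x)
  refine ⟨w, hw, fun y hy => ?_⟩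
  have hy' : y = ∑ i, b.repr ⟨y, hy⟩ i • (b i : X) := by
    have := congrArg Subtype.val (b.sum_repr ⟨y, hy⟩)
    simp only [Submodule.coe_sum, Submodule.coe_smul] at this
    exact this.symm
  rw [hy']
  simp only [map_sum, LinearMap.map_smulₛₗ, LinearMap.sum_apply, LinearMap.smul_apply, map_sub, h,
    sub_self, smul_zero, Finset.sum_const_zero]

theorem qaux_lower (Q : X →ₗ⋆[ℂ] X →ₗ[ℂ] ℂ)
    (hQ : ∀ x y, (starRingEnd ℂ) (Q x y) = Q y x)
    (W : Submodule ℂ X) [FiniteDimensional ℂ W] (hneg : ∀ x ∈ W, x ≠ 0 → (Q x x).re < 0)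
    {n : ℕ} (e : Fin n → X) (hWe : ∀ y ∈ W, ∀ i, Q y (e i) = 0)
    (he : ∀ i j, Q (e i) (e j) = if i = j then -1 else 0) :
    ((finrank ℂ W + n : ℕ) : ℕ∞) ≤ negIdx Q ⊤ := by
  let T : (W × (Fin n → ℂ)) →ₗ[ℂ] X := W.subtype.coprod (Fintype.linearCombination ℂ e)
  have hT : ∀ p, T p = (p.1 : X) + ∑ i, p.2 i • e i := by
    intro p
    simp [T, Fintype.linearCombination_apply]
  have hval : ∀ p, (Q (T p) (T p)).re = (Q p.1 p.1).re - ∑ i, Complex.normSq (p.2 i) := by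
    intro p
    have h1 : Q p.1 (∑ i, p.2 i • e i) = 0 := by
      simp [map_sum, hWe _ p.1.2]
    have h2 := qaux_symm Q hQ h1
    have h3 : Q (∑ i, p.2 i • e i) (∑ i, p.2 i • e i) = -∑ i, (Complex.normSq (p.2 i) : ℂ) := by
      simp only [map_sum, LinearMap.map_smulₛₗ, LinearMap.sum_apply, LinearMap.smul_apply, he,
        smul_eq_mul, RingHom.id_apply]
      simp [Complex.normSq_eq_conj_mul_self, mul_comm]
    rw [hT]
    simp only [map_add, LinearMap.add_apply, h1, h2, h3]
    simp [← Complex.ofReal_sum, sub_eq_add_neg]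
  have hlt : ∀ p, p ≠ 0 → (Q (T p) (T p)).re < 0 := by
    rintro ⟨w, a⟩ hp
    rw [hval]
    have hs : 0 ≤ ∑ i, Complex.normSq (a i) :=
      Finset.sum_nonneg fun i _ => Complex.normSq_nonneg _
    by_cases hw : w = 0
    · subst hw
      have ha : a ≠ 0 := fun h => hp (by rw [h]; rfl)
      obtain ⟨i, hi⟩ := Function.ne_iff.mp ha
      have : 0 < ∑ i, Complex.normSq (a i) :=
        Finset.sum_pos' (fun i _ => Complex.normSq_nonneg _)
          ⟨i, Finset.mem_univ _, Complex.normSq_pos.mpr hi⟩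
      simpa using this
    · have := hneg w w.2 (by simpa using hw)
      simp only
      linarith
  have hinj : Function.Injective T := by
    rw [← LinearMap.ker_eq_bot, LinearMap.ker_eq_bot']
    intro p hp
    by_contra hne
    have := hlt p hne
    rw [hp] at this
    simp at this
  apply le_sSup
  refine ⟨LinearMap.range T, le_top, inferInstance, ?_, ?_⟩
  · rintro _ ⟨p, rfl⟩ hx
    exact hlt p (fun h => hx (by rw [h, map_zero]))
  · rw [LinearMap.finrank_range_of_inj hinj]
    simp

/-- If `V^{𝔔𝔔} = V`, `dim X/V < ∞` and `V^𝔔 ⊆ V`, then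
`m⁻(𝔔) − m⁻(𝔔|_V) = dim(V^𝔔/ker 𝔔)`. -/
theorem morse_index_relative_isotropic
    (Q : X →ₗ⋆[ℂ] X →ₗ[ℂ] ℂ)
    (hQ : ∀ x y, (starRingEnd ℂ) (Q x y) = Q y x)
    (V : Submodule ℂ X) (hcodim : Module.Finite ℂ (X ⧸ V))
    (hVQQ : qPolar Q (qPolar Q V) = V) (hsub : qPolar Q V ≤ V)
    (hfin : negIdx Q V ≠ ⊤) :
    negIdx Q ⊤ = negIdx Q V
      + (Module.finrank ℂ ↥((qPolar Q V).map (qKer Q).mkQ) : ℕ∞) := by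
  have hNV : ∀ y ∈ qPolar Q V, ∀ v ∈ V, Q y v = 0 := fun y hy => hy
  have hne : Nonempty {k : ℕ∞ | ∃ W : Submodule ℂ X, W ≤ V ∧ FiniteDimensional ℂ W ∧
      (∀ x ∈ W, x ≠ 0 → (Q x x).re < 0) ∧ k = (Module.finrank ℂ W : ℕ∞)} :=
    ⟨⟨_, ⊥, bot_le, inferInstance, fun x hx h => absurd ((Submodule.mem_bot ℂ).mp hx) h, rfl⟩⟩
  -- a maximal negative definite subspace of `V`
  obtain ⟨W, hWV, hWfin, hneg, hWk⟩ := ENat.sSup_mem_of_nonempty_of_lt_top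
    (s := {k : ℕ∞ | ∃ W : Submodule ℂ X, W ≤ V ∧ FiniteDimensional ℂ W ∧
      (∀ x ∈ W, x ≠ 0 → (Q x x).re < 0) ∧ k = (Module.finrank ℂ W : ℕ∞)})
    (lt_top_iff_ne_top.mpr hfin)
  change negIdx Q V = _ at hWk
  -- lift of a basis of `X ⧸ V`, orthogonal to `W`
  let b := Module.finBasis ℂ (X ⧸ V)
  have hex : ∀ i, ∃ x : X, V.mkQ x = b i ∧ ∀ y ∈ W, Q y x = 0 := by
    intro i
    obtain ⟨x, hx⟩ := V.mkQ_surjective (b i)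
    obtain ⟨w, hw, h⟩ := qaux_proj Q hQ W hneg x
    refine ⟨x - w, ?_, h⟩
    have : V.mkQ w = 0 := by simpa using hWV hw
    rw [map_sub, hx, this, sub_zero]
  choose e heb heW using hex
  have hsurj := qaux_surj Q hQ e (qPolar Q V) (by
    intro a ha
    have hmem : ∑ i, a i • e i ∈ V := by
      apply hVQQ.le
      exact fun y hy => qaux_symm Q hQ (ha y hy)
    have h0 : V.mkQ (∑ i, a i • e i) = 0 :=
      (Submodule.Quotient.mk_eq_zero V).mpr hmem
    simp only [map_sum, map_smul, heb] at h0
    funext i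
    exact Fintype.linearIndependent_iff.mp b.linearIndependent a h0 i)
  have hker : ∀ y ∈ qPolar Q V, (∀ i, Q (e i) y = 0) → y ∈ qKer Q := by
    intro y hy h x _
    have hx : x - ∑ i, b.repr (V.mkQ x) i • e i ∈ V := by
      have : V.mkQ (x - ∑ i, b.repr (V.mkQ x) i • e i) = 0 := by
        simp only [map_sub, map_sum, map_smul, heb, b.sum_repr, sub_self]
      exact (Submodule.Quotient.mk_eq_zero V).mp this
    have h1 := hNV y hy _ hx
    have h2 : Q y (∑ i, b.repr (V.mkQ x) i • e i) = 0 := by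
      simp only [map_sum, map_smul]
      exact Finset.sum_eq_zero fun i _ => by rw [qaux_symm Q hQ (h i), smul_zero]
    rw [map_sub, h2, sub_zero] at h1
    exact h1
  -- dimension count
  have hdim : finrank ℂ ↥((qPolar Q V).map (qKer Q).mkQ) = finrank ℂ (X ⧸ V) := by
    let f : qPolar Q V →ₗ[ℂ] (Fin (finrank ℂ (X ⧸ V)) → ℂ) :=
      (LinearMap.pi (fun i => Q (e i))).domRestrict (qPolar Q V)
    let g := (qKer Q).mkQ.domRestrict (qPolar Q V)
    have hf : LinearMap.range f = ⊤ := by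
      rw [LinearMap.range_eq_top]
      intro c
      obtain ⟨y, hy, h⟩ := hsurj c
      exact ⟨⟨y, hy⟩, funext h⟩
    have hg : LinearMap.range g = (qPolar Q V).map (qKer Q).mkQ := by
      rw [LinearMap.range_domRestrict]
    have hfg : LinearMap.ker f = LinearMap.ker g := by
      ext y
      have e1 : y ∈ LinearMap.ker f ↔ ∀ i, Q (e i) y = 0 := by
        rw [LinearMap.mem_ker]
        exact funext_iff
      have e2 : y ∈ LinearMap.ker g ↔ (y : X) ∈ qKer Q := by
        simp [g]
      rw [e1, e2]
      exact ⟨hker y y.2, fun h i => qaux_symm Q hQ (h (e i) trivial)⟩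
    have h1 := f.quotKerEquivRange.finrank_eq
    have h2 := g.quotKerEquivRange.finrank_eq
    rw [← hg, ← h2, ← hfg, h1, hf, finrank_top, Module.finrank_fin_fun]
  rw [hdim]
  apply le_antisymm (qaux_upper Q V hcodim)
  -- correct the `e i` by elements of `V^Q`
  choose u hu hue using fun j => hsurj
    (fun i => (1 / 2 : ℂ) * (Q (e i) (e j) + if i = j then 1 else 0))
  have huV : ∀ j, u j ∈ V := fun j => hsub (hu j)
  rw [hWk]
  refine le_trans (le_of_eq ?_) (qaux_lower Q hQ W hneg (fun i => e i - u i) ?_ ?_)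
  · push_cast; rfl
  · intro y hy i
    rw [map_sub, heW i y hy, qaux_symm Q hQ (hNV _ (hu i) y (hWV hy)), sub_zero]
  · intro i j
    have h1 : Q (u i) (u j) = 0 := hNV _ (hu i) _ (huV j)
    have h2 : Q (u i) (e j) = (1 / 2 : ℂ) * (Q (e i) (e j) + if i = j then 1 else 0) := by
      rw [← hQ, hue, map_mul, map_add, hQ]
      congr 1
      · simp [Complex.conj_ofNat]
      · by_cases hij : i = j
        · simp [hij]
        · simp [hij, Ne.symm hij]
    simp only [map_sub, LinearMap.sub_apply, h1, h2, hue]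
    split_ifs <;> ring
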